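/- Positivity of the limiting Betti number: fix integers 0 ≤ q < d and t ∈ [0,1], and let P be a stationary and ergodic probability measure on Ω = [0,1]^{K^d}. If there exists a positive integer K with P(Ω_q(0,K,t)) > 0, then β̂_q(t) > 0, where β̂_q(t) := limsup_{n→∞} |Λ_n|^{−1} E[β_q^n(t)]. In fact β̂_q(t) ≥ (2K+2)^{−d} P(Ω_q(0,K,t)). -/

import Mathlib

open MeasureTheory Filter Topology

noncomputable section

/-- An elementary cube in `ℝ^d`: the `i`-th component is the elementary interval
`[l, l+1]` if the Boolean is `true` (nondegenerate) and `[l, l]` if `false` (degenerate). -/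
abbrev ElemCube (d : ℕ) := Fin d → ℤ × Bool

/-- The dimension of an elementary cube: the number of nondegenerate components. -/
def cubeDim {d : ℕ} (Q : ElemCube d) : ℕ :=
  (Finset.univ.filter fun i => (Q i).2 = true).card

/-- The geometric realization of an elementary cube as a subset of `ℝ^d`. -/
def cubeSet {d : ℕ} (Q : ElemCube d) : Set (Fin d → ℝ) :=
  {x | ∀ i, x i ∈ Set.Icc ((Q i).1 : ℝ) ((Q i).1 + (if (Q i).2 then 1 else 0))}

/-- A cubical set is a union of elementary cubes. -/
def IsCubical {d : ℕ} (X : Set (Fin d → ℝ)) : Prop :=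
  ∃ S : Set (ElemCube d), X = ⋃ Q ∈ S, cubeSet Q

/-- The free `ℤ`-module generated by all elementary cubes of `ℝ^d` (all dimensions mixed). -/
abbrev CubChain (d : ℕ) := ElemCube d →₀ ℤ

/-- The cubical boundary of a single elementary cube, defined by induction on the ambient
dimension, following the inductive definition: in `ℝ¹`, `∂ [l,l+1]^ = [l+1]^ - [l]^` and
`∂ Q̂ = 0` for degenerate `Q`; and for `Q = I × P`,
`∂ Q̂ = (∂ Î) ⋄ P̂ + (-1)^(dim I) Î ⋄ (∂ P̂)`, where `⋄` is the cubical product. -/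
def boundaryCube : (d : ℕ) → ElemCube d → CubChain d
  | 0, _ => 0
  | d + 1, Q =>
      (if (Q 0).2 then
          Finsupp.single (Fin.cons ((Q 0).1 + 1, false) (fun i => Q i.succ)) (1 : ℤ)
            - Finsupp.single (Fin.cons ((Q 0).1, false) (fun i => Q i.succ)) (1 : ℤ)
        else 0)
      + (if (Q 0).2 then (-1 : ℤ) else 1) •
          (boundaryCube d (fun i => Q i.succ)).sum
            (fun R n => Finsupp.single (Fin.cons (Q 0) R) n)

/-- The cubical boundary operator, the `ℤ`-linear extension of `boundaryCube`. -/
def boundaryHom (d : ℕ) : CubChain d →ₗ[ℤ] CubChain d :=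
  Finsupp.lsum ℤ fun Q => LinearMap.toSpanSingleton ℤ (CubChain d) (boundaryCube d Q)

/-- `C_k^d(X)`: the submodule of chains supported on the `k`-dimensional elementary cubes
contained in `X`. -/
def chainsOn (d k : ℕ) (X : Set (Fin d → ℝ)) : Submodule ℤ (CubChain d) :=
  Finsupp.supported ℤ ℤ {Q : ElemCube d | cubeDim Q = k ∧ cubeSet Q ⊆ X}

/-- `Z_q(X) = ker ∂_q^X`, the cycles of the cubical set `X` in degree `q`. -/
def cycleMod (d q : ℕ) (X : Set (Fin d → ℝ)) : Submodule ℤ (CubChain d) :=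
  chainsOn d q X ⊓ LinearMap.ker (boundaryHom d)

/-- `B_q(X) = im ∂_{q+1}^X`, the boundaries of the cubical set `X` in degree `q`. -/
def boundaryMod (d q : ℕ) (X : Set (Fin d → ℝ)) : Submodule ℤ (CubChain d) :=
  Submodule.map (boundaryHom d) (chainsOn d (q + 1) X)

/-- The `q`-th Betti number of a cubical set: the rank of the free part of the `q`-th
cubical homology `H_q(X) = Z_q(X) / B_q(X)`. -/
def betti (d q : ℕ) (X : Set (Fin d → ℝ)) : ℕ :=
  Module.finrank ℤ
    (↥(cycleMod d q X) ⧸ (boundaryMod d q X).comap (cycleMod d q X).subtype)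

/-- `Λ_n = [-n, n]^d ⊆ ℝ^d`. -/
def lambda (d n : ℕ) : Set (Fin d → ℝ) := {x | ∀ i, x i ∈ Set.Icc (-(n : ℝ)) n}

/-- The configuration space `Ω = [0,1]^{K^d}` with the product σ-field. -/
abbrev Config (d : ℕ) := ElemCube d → unitInterval

/-- Translation of an elementary cube by `x ∈ ℤ^d`. -/
def translateCube {d : ℕ} (x : Fin d → ℤ) (Q : ElemCube d) : ElemCube d :=
  fun i => ((Q i).1 + x i, (Q i).2)

/-- The translation action `τ_x` on configurations: `(τ_x ω)_Q = ω_{-x+Q}`. -/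
def configShift {d : ℕ} (x : Fin d → ℤ) (ω : Config d) : Config d :=
  fun Q => ω (translateCube (-x) Q)

/-- Stationarity of a measure on configuration space: `P(τ_x⁻¹ A) = P(A)`. -/
def Stationary {d : ℕ} (P : Measure (Config d)) : Prop :=
  ∀ (x : Fin d → ℤ) (A : Set (Config d)), MeasurableSet A → P (configShift x ⁻¹' A) = P A

/-- Ergodicity of a measure on configuration space under translations. -/
def ErgodicConfig {d : ℕ} (P : Measure (Config d)) : Prop :=
  ∀ A : Set (Config d), MeasurableSet A →
    (∀ x : Fin d → ℤ, configShift x ⁻¹' A = A) → P A = 0 ∨ P A = 1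

/-- The random cubical set `X(t) = ⋃ {Q ∈ K^d : ω_Q ≤ t}`. -/
def cubSet {d : ℕ} (ω : Config d) (t : ℝ) : Set (Fin d → ℝ) :=
  ⋃ Q ∈ {Q : ElemCube d | (ω Q : ℝ) ≤ t}, cubeSet Q

/-- `β_q^n(t)(ω) = β_q(X(t) ∩ Λ_n)`. -/
def bettiN (d q n : ℕ) (t : ℝ) (ω : Config d) : ℕ :=
  betti d q (cubSet ω t ∩ lambda d n)

/-- `β̂_q(t) := limsup_{n → ∞} |Λ_n|⁻¹ E[β_q^n(t)]`, where `|Λ_n| = (2n)^d`. -/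
def betaHat (d q : ℕ) (P : Measure (Config d)) (t : ℝ) : ℝ :=
  limsup (fun n : ℕ => ((2 * (n : ℝ)) ^ d)⁻¹ * ∫ ω, (bettiN d q n t ω : ℝ) ∂P) atTop

/-- `L_{x,K} = {Q ∈ K^d : Q ⊆ x + Λ_K}`, here for `x = 0`:
the elementary cubes contained in `Λ_K`. -/
def cubesIn (d K : ℕ) : Set (ElemCube d) := {Q : ElemCube d | cubeSet Q ⊆ lambda d K}

/-- `X_L(t) = ⋃ {Q ∈ L : ω_Q ≤ t}` for a family `L` of elementary cubes. -/
def cubSetOn {d : ℕ} (L : Set (ElemCube d)) (ω : Config d) (t : ℝ) : Set (Fin d → ℝ) :=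
  ⋃ Q ∈ {Q ∈ L | (ω Q : ℝ) ≤ t}, cubeSet Q

/-- `Ω_q(0,K,t)`: the set of configurations `ω` such that
`β_q(X_L(t)) ≥ 1 + β_q(X_{L \ L_{0,K}}(t))` for every finite `L ⊆ K^d` with `L_{0,K} ⊆ L`. -/
def goodConfigs (d q K : ℕ) (t : ℝ) : Set (Config d) :=
  {ω | ∀ L : Set (ElemCube d), L.Finite → cubesIn d K ⊆ L →
    1 + betti d q (cubSetOn (L \ cubesIn d K) ω t) ≤ betti d q (cubSetOn L ω t)}

/-
Tile `Λ_n`, `n = (K + 1) m`, by `m ^ d` cubes of side `2 (K + 1)`. The blocks `x + Λ_K` around their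
centres `x` have disjoint families of elementary cubes, so deleting them one after the other from
the cubes of `Λ_n` lowers the Betti number by at least one for each `x` whose shifted configuration
lies in `Ω_q(0,K,t)`. Hence the Betti number of the union of the occupied cubes inside `Λ_n` is at
least the number of such `x`, whose expectation is `m ^ d P(Ω_q(0,K,t))` by stationarity. This union
is contained in `X(t) ∩ Λ_n`, and the two sets differ only by cubes not contained in `Λ_{n-1}`. Each
extra cube can kill at most one homology class, and there are `O(n ^ (d - 1))` of them, which is
negligible after division by `|Λ_n| = (2n) ^ d`.
-/

lemma le_limsup_of_tendsto_of_le_comp {α β R : Type*} {l : Filter α} {l' : Filter β} [l'.NeBot]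
    [ConditionallyCompleteLinearOrder R] [TopologicalSpace R] [OrderTopology R]
    {u : α → R} {v : β → R} {φ : β → α} {c : R}
    (hu : IsBoundedUnder (· ≤ ·) l u) (hφ : Tendsto φ l' l) (hv : Tendsto v l' (𝓝 c))
    (hvu : ∀ᶠ b in l', v b ≤ u (φ b)) : c ≤ limsup u l := by
  have hcobdd : IsCoboundedUnder (· ≤ ·) l' (u ∘ φ) :=
    (hv.isBoundedUnder_ge.mono_ge hvu).isCoboundedUnder_le
  calc c = limsup v l' := hv.limsup_eq.symm
    _ ≤ limsup (u ∘ φ) l' :=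
        limsup_le_limsup hvu hv.isCoboundedUnder_le (hφ.isBoundedUnder_comp hu)
    _ ≤ limsup u l := hφ.limsup_comp_le_limsup hcobdd hu

section Subquotient

universe u

variable {R : Type*} {M : Type u} [Ring R] [AddCommGroup M] [Module R M]

lemma map_ker_mapQ_inclusion_le {Z Z' B B' S : Submodule R M} (hZ : Z ≤ Z') (hB : B ≤ B')
    (hS : B' ≤ B ⊔ S) :
    (LinearMap.ker (Submodule.mapQ (B.comap Z.subtype) (B'.comap Z'.subtype)
      (Submodule.inclusion hZ) fun _ hz => hB hz)).map
        (Submodule.mapQ (B.comap Z.subtype) B Z.subtype le_rfl) ≤ S.map B.mkQ := by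
  rintro _ ⟨x, hx, rfl⟩
  obtain ⟨z, rfl⟩ := Submodule.mkQ_surjective _ x
  have hz : (z : M) ∈ B' := by simpa using hx
  obtain ⟨b, hb, s, hs, hbs⟩ := Submodule.mem_sup.1 (hS hz)
  refine ⟨s, hs, ?_⟩
  simp only [Submodule.mkQ_apply, Submodule.mapQ_apply, Submodule.subtype_apply]
  rw [Submodule.Quotient.eq, ← hbs]
  simpa using hb

lemma rank_subquotient_le_add [HasRankNullity.{u} R] {Z Z' B B' S : Submodule R M}
    (hZ : Z ≤ Z') (hB : B ≤ B') (hS : B' ≤ B ⊔ S) :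
    Module.rank R (Z ⧸ B.comap Z.subtype) ≤
      Module.rank R (Z' ⧸ B'.comap Z'.subtype) + Module.rank R S := by
  let f : (Z ⧸ B.comap Z.subtype) →ₗ[R] (Z' ⧸ B'.comap Z'.subtype) :=
    Submodule.mapQ _ _ (Submodule.inclusion hZ) fun _ hz => hB hz
  let g : (Z ⧸ B.comap Z.subtype) →ₗ[R] (M ⧸ B) := Submodule.mapQ _ _ Z.subtype le_rfl
  have hg : Function.Injective g :=
    LinearMap.ker_eq_bot.1 (Submodule.ker_liftQ_eq_bot _ _ _ (by simp [LinearMap.ker_comp]))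
  -- `g` embeds the kernel of `f` into the image of `S` in `M ⧸ B`.
  have hker : Module.rank R (LinearMap.ker f) ≤ Module.rank R S :=
    calc Module.rank R (LinearMap.ker f)
        = Module.rank R ((LinearMap.ker f).map g) :=
          (Submodule.equivMapOfInjective g hg _).rank_eq
      _ ≤ Module.rank R (S.map B.mkQ) :=
          Submodule.rank_mono (map_ker_mapQ_inclusion_le hZ hB hS)
      _ ≤ Module.rank R S := rank_map_le _ _
  rw [← LinearMap.rank_range_add_rank_ker f]
  exact add_le_add (Submodule.rank_le _) hker

lemma finrank_subquotient_map {N : Type*} [AddCommGroup N] [Module R N] (e : M ≃ₗ[R] N)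
    (Z B : Submodule R M) :
    Module.finrank R (Z.map (e : M →ₗ[R] N) ⧸
        (B.map (e : M →ₗ[R] N)).comap (Z.map (e : M →ₗ[R] N)).subtype) =
      Module.finrank R (Z ⧸ B.comap Z.subtype) := by
  refine (Submodule.Quotient.equiv _ _ (e.submoduleMap Z) ?_).finrank_eq.symm
  ext ⟨_, z, hz, rfl⟩
  simp

end Subquotient

section Betti

variable {d q k : ℕ} {X Y : Set (Fin d → ℝ)}

/-- The elementary cubes contained in `X`; the cubical chains of `X` are supported on them. -/
def cubesWithin (X : Set (Fin d → ℝ)) : Set (ElemCube d) := {Q | cubeSet Q ⊆ X}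

lemma cubesWithin_mono (h : X ⊆ Y) : cubesWithin X ⊆ cubesWithin Y := fun _ hQ => hQ.trans h

lemma chainsOn_mono (h : X ⊆ Y) : chainsOn d k X ≤ chainsOn d k Y :=
  Finsupp.supported_mono fun _ hQ => ⟨hQ.1, hQ.2.trans h⟩

lemma rank_chainsOn_le (hX : (cubesWithin X).Finite) :
    Module.rank ℤ (chainsOn d k X) ≤ (cubesWithin X).ncard := by
  rw [chainsOn, Finsupp.supported_eq_span_single, Set.cast_ncard hX]
  exact (rank_span_le _).trans
    (Cardinal.mk_image_le.trans (Cardinal.mk_le_mk_of_subset fun _ hQ => hQ.2))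

lemma rank_homology_le (hX : (cubesWithin X).Finite) :
    Module.rank ℤ (cycleMod d q X ⧸ (boundaryMod d q X).comap (cycleMod d q X).subtype) ≤
      (cubesWithin X).ncard :=
  (rank_quotient_le _).trans
    ((Submodule.rank_mono inf_le_left).trans (rank_chainsOn_le hX))

lemma betti_le_ncard_cubesWithin (hX : (cubesWithin X).Finite) :
    betti d q X ≤ (cubesWithin X).ncard :=
  Module.finrank_le_of_rank_le (rank_homology_le hX)

lemma boundaryHom_single (Q : ElemCube d) (n : ℤ) :
    boundaryHom d (Finsupp.single Q n) = n • boundaryCube d Q := by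
  simp [boundaryHom]

lemma boundaryMod_le_sup_span_boundaryCube :
    boundaryMod d q Y ≤ boundaryMod d q X ⊔
      Submodule.span ℤ (boundaryCube d '' (cubesWithin Y \ cubesWithin X)) := by
  rw [boundaryMod, chainsOn, Finsupp.supported_eq_span_single, Submodule.map_span,
    Submodule.span_le]
  rintro _ ⟨_, ⟨Q, ⟨hdim, hQY⟩, rfl⟩, rfl⟩
  by_cases hQX : cubeSet Q ⊆ X
  · exact Submodule.mem_sup_left
      (Submodule.mem_map_of_mem (Finsupp.single_mem_supported ℤ 1 ⟨hdim, hQX⟩))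
  · refine Submodule.mem_sup_right (Submodule.subset_span ⟨Q, ⟨hQY, hQX⟩, ?_⟩)
    simp only [boundaryHom_single, one_smul]

lemma betti_le_betti_add_ncard (hXY : X ⊆ Y) (hY : (cubesWithin Y).Finite) :
    betti d q X ≤ betti d q Y + (cubesWithin Y \ cubesWithin X).ncard := by
  refine Module.finrank_le_of_rank_le ?_
  have hrank := rank_subquotient_le_add
    (inf_le_inf_right (LinearMap.ker (boundaryHom d)) (chainsOn_mono (k := q) hXY))
    (Submodule.map_mono (chainsOn_mono hXY))
    (boundaryMod_le_sup_span_boundaryCube (q := q) (X := X) (Y := Y))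
  have hspan : Module.rank ℤ (Submodule.span ℤ
      (boundaryCube d '' (cubesWithin Y \ cubesWithin X))) ≤
        ((cubesWithin Y \ cubesWithin X).ncard : Cardinal) := by
    rw [Set.cast_ncard hY.sdiff]
    exact (rank_span_le _).trans Cardinal.mk_image_le
  have hbetti : Module.rank ℤ
      (cycleMod d q Y ⧸ (boundaryMod d q Y).comap (cycleMod d q Y).subtype) = betti d q Y :=
    (Cardinal.cast_toNat_of_lt_aleph0
      ((rank_homology_le hY).trans_lt (Cardinal.natCast_lt_aleph0))).symm
  push_cast
  exact hrank.trans (add_le_add hbetti.le hspan)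

lemma betti_eq_of_equiv {d' : ℕ} {X' : Set (Fin d' → ℝ)} (e : CubChain d ≃ₗ[ℤ] CubChain d')
    (he : ∀ c, boundaryHom d' (e c) = e (boundaryHom d c))
    (hX : ∀ k, (chainsOn d k X).map (e : CubChain d →ₗ[ℤ] CubChain d') = chainsOn d' k X') :
    betti d q X = betti d' q X' := by
  have hcycle : (cycleMod d q X).map (e : CubChain d →ₗ[ℤ] CubChain d') = cycleMod d' q X' := by
    rw [cycleMod, Submodule.map_inf _ e.injective, hX]
    congr 1
    ext c
    rw [Submodule.mem_map_equiv, LinearMap.mem_ker, LinearMap.mem_ker, ← e.map_eq_zero_iff,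
      ← he, e.apply_symm_apply]
  have hboundary :
      (boundaryMod d q X).map (e : CubChain d →ₗ[ℤ] CubChain d') = boundaryMod d' q X' := by
    rw [boundaryMod, boundaryMod, ← hX, ← Submodule.map_comp, ← Submodule.map_comp]
    congr 1
    exact LinearMap.ext fun c => (he c).symm
  rw [betti, betti, ← hcycle, ← hboundary, finrank_subquotient_map]

end Betti

section Translation

variable {d : ℕ}

/-- The point of `ℝ^d` given by an integer vector. -/
def intPoint (x : Fin d → ℤ) : Fin d → ℝ := fun i => x i

/-- Translation by `x ∈ ℤ^d` as a permutation of the elementary cubes. -/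
def translateEquiv (x : Fin d → ℤ) : ElemCube d ≃ ElemCube d where
  toFun := translateCube x
  invFun := translateCube (-x)
  left_inv Q := by ext i <;> simp [translateCube]
  right_inv Q := by ext i <;> simp [translateCube]

lemma translateCube_translateCube_neg (x : Fin d → ℤ) (Q : ElemCube d) :
    translateCube x (translateCube (-x) Q) = Q :=
  (translateEquiv x).apply_symm_apply Q

lemma translateCube_cons (x : Fin (d + 1) → ℤ) (I : ℤ × Bool) (Q : ElemCube d) :
    translateCube x (Fin.cons I Q : ElemCube (d + 1)) =
      Fin.cons (I.1 + x 0, I.2) (translateCube (Fin.tail x) Q) := by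
  funext i
  refine Fin.cases ?_ (fun i => ?_) i <;> simp [translateCube, Fin.tail]

lemma boundaryCube_cons (I : ℤ × Bool) (P : ElemCube d) :
    boundaryCube (d + 1) (Fin.cons I P) =
      (if I.2 then Finsupp.single (Fin.cons (I.1 + 1, false) P) 1 -
        Finsupp.single (Fin.cons (I.1, false) P) 1 else 0) +
      (if I.2 then -1 else 1 : ℤ) • (boundaryCube d P).mapDomain (Fin.cons I) :=
  rfl

lemma boundaryCube_translateCube : ∀ {d : ℕ} (x : Fin d → ℤ) (Q : ElemCube d),
    boundaryCube d (translateCube x Q) = (boundaryCube d Q).mapDomain (translateCube x)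
  | 0, _, _ => by simp [boundaryCube]
  | d + 1, x, Q => by
    induction Q using Fin.consCases with | cons I P
    have hcons : translateCube x ∘ Fin.cons (α := fun _ => ℤ × Bool) I =
        Fin.cons (α := fun _ => ℤ × Bool) (I.1 + x 0, I.2) ∘ translateCube (Fin.tail x) :=
      funext (translateCube_cons x I)
    rw [translateCube_cons, boundaryCube_cons, boundaryCube_cons,
      boundaryCube_translateCube (Fin.tail x) P, Finsupp.mapDomain_add, Finsupp.mapDomain_smul,
      ← Finsupp.mapDomain_comp, ← Finsupp.mapDomain_comp, hcons]
    congr 1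
    cases I.2
    · simp
    · simp only [if_true, sub_eq_add_neg, ← Finsupp.single_neg, Finsupp.mapDomain_add,
        Finsupp.mapDomain_single, translateCube_cons, add_right_comm _ (1 : ℤ)]

lemma add_intPoint_mem_cubeSet_translateCube (x : Fin d → ℤ) (Q : ElemCube d) (y : Fin d → ℝ) :
    y + intPoint x ∈ cubeSet (translateCube x Q) ↔ y ∈ cubeSet Q := by
  simp only [cubeSet, translateCube, intPoint, Set.mem_ofPred_eq, Set.mem_Icc, Pi.add_apply,
    Int.cast_add, add_right_comm _ (x _ : ℝ), add_le_add_iff_right]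
  rfl

lemma translateCube_mem_cubesWithin (x : Fin d → ℤ) (Q : ElemCube d) (X : Set (Fin d → ℝ)) :
    translateCube x Q ∈ cubesWithin X ↔ Q ∈ cubesWithin ((· + intPoint x) ⁻¹' X) := by
  refine ⟨fun h y hy => h ((add_intPoint_mem_cubeSet_translateCube x Q y).2 hy), fun h y hy => ?_⟩
  rw [← sub_add_cancel y (intPoint x), add_intPoint_mem_cubeSet_translateCube] at hy
  simpa using h hy

/-- The automorphism of the cubical chains induced by translation by `x ∈ ℤ^d`. -/
def translateChain (x : Fin d → ℤ) : CubChain d ≃ₗ[ℤ] CubChain d :=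
  Finsupp.domLCongr (translateEquiv x)

lemma translateChain_apply (x : Fin d → ℤ) (c : CubChain d) :
    translateChain x c = c.mapDomain (translateCube x) :=
  Finsupp.equivMapDomain_eq_mapDomain (translateEquiv x) c

lemma boundaryHom_translateChain (x : Fin d → ℤ) (c : CubChain d) :
    boundaryHom d (translateChain x c) = translateChain x (boundaryHom d c) := by
  simp only [translateChain_apply]
  induction c using Finsupp.induction_linear with
  | zero => simp
  | add f g hf hg => simp only [Finsupp.mapDomain_add, map_add, hf, hg]
  | single Q n =>
    rw [Finsupp.mapDomain_single, boundaryHom_single, boundaryHom_single,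
      boundaryCube_translateCube, Finsupp.mapDomain_smul]

lemma map_translateChain_chainsOn (k : ℕ) (x : Fin d → ℤ) (X : Set (Fin d → ℝ)) :
    (chainsOn d k ((· + intPoint x) ⁻¹' X)).map
      (translateChain x : CubChain d →ₗ[ℤ] CubChain d) = chainsOn d k X := by
  have hmap : (translateChain x : CubChain d →ₗ[ℤ] CubChain d) =
      Finsupp.lmapDomain ℤ ℤ (translateCube x) := LinearMap.ext (translateChain_apply x)
  have himage : translateCube x '' {Q | cubeDim Q = k ∧ cubeSet Q ⊆ (· + intPoint x) ⁻¹' X} =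
      {Q | cubeDim Q = k ∧ cubeSet Q ⊆ X} := by
    refine Set.Subset.antisymm ?_ fun Q hQ =>
      ⟨translateCube (-x) Q, ⟨hQ.1, ?_⟩, translateCube_translateCube_neg x Q⟩
    · rintro _ ⟨Q, hQ, rfl⟩
      exact ⟨hQ.1, (translateCube_mem_cubesWithin x Q X).2 hQ.2⟩
    · refine (translateCube_mem_cubesWithin x _ X).1 ?_
      rw [translateCube_translateCube_neg]
      exact hQ.2
  rw [hmap, chainsOn, Finsupp.lmapDomain_supported, himage, chainsOn]

lemma betti_preimage_add_intPoint (q : ℕ) (x : Fin d → ℤ) (X : Set (Fin d → ℝ)) :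
    betti d q ((· + intPoint x) ⁻¹' X) = betti d q X :=
  betti_eq_of_equiv (translateChain x) (boundaryHom_translateChain x)
    fun k => map_translateChain_chainsOn k x X

end Translation

section ElementaryCubes

variable {d n : ℕ}

lemma corner_mem_cubeSet (Q : ElemCube d) : intPoint (fun i => (Q i).1) ∈ cubeSet Q :=
  fun i => ⟨le_rfl, by simp only [intPoint]; split_ifs <;> simp⟩

lemma opposite_corner_mem_cubeSet (Q : ElemCube d) :
    intPoint (fun i => (Q i).1 + if (Q i).2 then 1 else 0) ∈ cubeSet Q :=
  fun i => by simp only [intPoint]; split_ifs <;> simp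

/-- The barycentre of an elementary cube, a point of its relative interior. -/
def cubeCenter (Q : ElemCube d) : Fin d → ℝ :=
  fun i => (Q i).1 + if (Q i).2 then 1 / 2 else 0

lemma cubeCenter_mem_cubeSet (Q : ElemCube d) : cubeCenter Q ∈ cubeSet Q := fun i => by
  simp only [cubeCenter]; split_ifs <;> norm_num

lemma cubeSet_subset_of_cubeCenter_mem {Q R : ElemCube d} (h : cubeCenter Q ∈ cubeSet R) :
    cubeSet Q ⊆ cubeSet R := by
  intro x hx i
  obtain ⟨hQl, hQr⟩ := hx i
  obtain ⟨hRl, hRr⟩ := h i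
  simp only [cubeCenter] at hRl hRr
  have hl : ((R i).1 : ℝ) ≤ (Q i).1 := by
    have : ((R i).1 : ℝ) < (Q i).1 + 1 := by split_ifs at hRl <;> linarith
    exact_mod_cast Int.lt_add_one_iff.1 (by exact_mod_cast this)
  refine ⟨hl.trans hQl, hQr.trans ?_⟩
  split_ifs at hRr ⊢
  · have : ((Q i).1 : ℝ) < (R i).1 + 1 := by linarith
    have : ((Q i).1 : ℝ) ≤ (R i).1 := by
      exact_mod_cast Int.lt_add_one_iff.1 (by exact_mod_cast this)
    linarith
  · linarith
  · exact hRr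
  · exact hRr

lemma exists_cubeSet_subset_of_subset_iUnion {Q : ElemCube d} {S : Set (ElemCube d)}
    (h : cubeSet Q ⊆ ⋃ R ∈ S, cubeSet R) : ∃ R ∈ S, cubeSet Q ⊆ cubeSet R := by
  obtain ⟨R, hR, hQR⟩ := Set.mem_iUnion₂.1 (h (cubeCenter_mem_cubeSet Q))
  exact ⟨R, hR, cubeSet_subset_of_cubeCenter_mem hQR⟩

lemma mem_cubesIn_succ_of_mem {Q : ElemCube d} {x : Fin d → ℝ} (hxQ : x ∈ cubeSet Q)
    (hx : x ∈ lambda d n) : Q ∈ cubesIn d (n + 1) := by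
  intro y hy i
  obtain ⟨hxl, hxr⟩ := hxQ i
  obtain ⟨hyl, hyr⟩ := hy i
  obtain ⟨hnl, hnr⟩ := hx i
  push_cast
  constructor <;> split_ifs at hxr hyr <;> linarith

lemma mem_cubesIn_iff {Q : ElemCube d} : Q ∈ cubesIn d n ↔
    ∀ i, -(n : ℤ) ≤ (Q i).1 ∧ (Q i).1 + (if (Q i).2 then 1 else 0) ≤ n := by
  constructor
  · intro h i
    have hl := (h (corner_mem_cubeSet Q) i).1
    have hr := (h (opposite_corner_mem_cubeSet Q) i).2
    simp only [intPoint] at hl hr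
    exact_mod_cast And.intro hl hr
  · intro h x hx i
    obtain ⟨hl, hr⟩ := h i
    have hl' : -(n : ℝ) ≤ (Q i).1 := by exact_mod_cast hl
    have hr' : ((Q i).1 + (if (Q i).2 then 1 else 0) : ℝ) ≤ n := by exact_mod_cast hr
    exact ⟨hl'.trans (hx i).1, (hx i).2.trans hr'⟩

/-- The elementary intervals contained in `[-n, n]`, the factors of the cubes in `cubesIn d n`. -/
def intervalsIn (n : ℕ) : Finset (ℤ × Bool) :=
  Finset.Icc (-n : ℤ) n ×ˢ {false} ∪ Finset.Ico (-n : ℤ) n ×ˢ {true}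

lemma card_intervalsIn (n : ℕ) : (intervalsIn n).card = 4 * n + 1 := by
  have hdisj : Disjoint (Finset.Icc (-n : ℤ) n ×ˢ {false}) (Finset.Ico (-n : ℤ) n ×ˢ {true}) :=
    Finset.disjoint_product.2 (Or.inr (by simp))
  rw [intervalsIn, Finset.card_union_of_disjoint hdisj]
  simp only [Finset.card_product, Int.card_Icc, Int.card_Ico, Finset.card_singleton]
  omega

lemma cubesIn_eq_coe_piFinset (d n : ℕ) :
    cubesIn d n = Fintype.piFinset fun _ : Fin d => intervalsIn n := by
  ext Q
  rw [mem_cubesIn_iff, Finset.mem_coe, Fintype.mem_piFinset]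
  refine forall_congr' fun i => ?_
  obtain ⟨l, b⟩ := Q i
  cases b <;> simp [intervalsIn]

lemma finite_cubesIn (d n : ℕ) : (cubesIn d n).Finite := by
  rw [cubesIn_eq_coe_piFinset]
  exact Finset.finite_toSet _

lemma ncard_cubesIn (d n : ℕ) : (cubesIn d n).ncard = (4 * n + 1) ^ d := by
  rw [cubesIn_eq_coe_piFinset, Set.ncard_coe_finset, Fintype.card_piFinset_const,
    card_intervalsIn]

/-- The elementary cubes of `Λ_n` that are not contained in `Λ_{n-1}`. With truncated subtraction
this is only meaningful for `n ≠ 0`. -/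
def outerCubes (d n : ℕ) : Set (ElemCube d) := cubesIn d n \ cubesIn d (n - 1)

lemma cubesIn_mono (d : ℕ) : Monotone (cubesIn d) := fun m n hmn =>
  cubesWithin_mono fun _ hx i => Set.Icc_subset_Icc (by simpa) (by simpa) (hx i)

lemma ncard_outerCubes (d : ℕ) (hn : n ≠ 0) :
    ((outerCubes d n).ncard : ℝ) = (4 * n + 1) ^ d - (4 * n - 3) ^ d := by
  obtain ⟨k, rfl⟩ := Nat.exists_eq_succ_of_ne_zero hn
  rw [outerCubes, Set.cast_ncard_sdiff (cubesIn_mono d (Nat.sub_le _ _)) (finite_cubesIn d _),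
    ncard_cubesIn, ncard_cubesIn]
  push_cast [Nat.succ_sub_one]
  ring

lemma tendsto_ncard_outerCubes_div (d : ℕ) :
    Tendsto (fun n : ℕ => ((2 * (n : ℝ)) ^ d)⁻¹ * (outerCubes d n).ncard) atTop (𝓝 0) := by
  have hinv := tendsto_inv_atTop_nhds_zero_nat (𝕜 := ℝ)
  have hlim : Tendsto (fun n : ℕ => (2 + 1 / 2 * (n : ℝ)⁻¹) ^ d - (2 - 3 / 2 * (n : ℝ)⁻¹) ^ d)
      atTop (𝓝 ((2 + 1 / 2 * 0) ^ d - (2 - 3 / 2 * 0) ^ d)) :=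
    (((hinv.const_mul _).const_add _).pow d).sub (((hinv.const_mul _).const_sub _).pow d)
  simp only [mul_zero, add_zero, sub_zero, sub_self] at hlim
  refine hlim.congr' ?_
  filter_upwards [eventually_ne_atTop 0] with n hn
  rw [ncard_outerCubes d hn, mul_sub, ← inv_pow, ← mul_pow, ← mul_pow]
  congr 2 <;> field_simp <;> ring

end ElementaryCubes

section RandomSets

variable {d q n : ℕ} {t : ℝ} {ω : Config d}

lemma cubSet_inter_lambda_eq (ω : Config d) (t : ℝ) (n : ℕ) :
    cubSet ω t ∩ lambda d n = cubSetOn (cubesIn d (n + 1)) ω t ∩ lambda d n := by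
  refine Set.Subset.antisymm ?_ ?_
  · rintro x ⟨hx, hxn⟩
    obtain ⟨Q, hQ, hxQ⟩ := Set.mem_iUnion₂.1 hx
    exact ⟨Set.mem_biUnion ⟨mem_cubesIn_succ_of_mem hxQ hxn, hQ⟩ hxQ, hxn⟩
  · exact Set.inter_subset_inter_left _ (Set.biUnion_subset_biUnion_left fun _ hQ => hQ.2)

lemma cubSetOn_cubesIn_subset (ω : Config d) (t : ℝ) (n : ℕ) :
    cubSetOn (cubesIn d n) ω t ⊆ cubSet ω t ∩ lambda d n :=
  Set.iUnion₂_subset fun _ hQ _ hx => ⟨Set.mem_biUnion hQ.2 hx, hQ.1 hx⟩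

lemma finite_cubesWithin_inter_lambda (X : Set (Fin d → ℝ)) (n : ℕ) :
    (cubesWithin (X ∩ lambda d n)).Finite :=
  (finite_cubesIn d n).subset (cubesWithin_mono Set.inter_subset_right)

lemma bettiN_le (d q n : ℕ) (t : ℝ) (ω : Config d) : bettiN d q n t ω ≤ (4 * n + 1) ^ d := by
  rw [← ncard_cubesIn]
  exact (betti_le_ncard_cubesWithin (finite_cubesWithin_inter_lambda _ n)).trans
    (Set.ncard_le_ncard (cubesWithin_mono Set.inter_subset_right) (finite_cubesIn d n))

-- A cube of `X(t)` inside `Λ_{n-1}` is a face of an occupied cube, which lies in `Λ_n`.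
lemma cubesWithin_sdiff_subset_outerCubes (hn : n ≠ 0) :
    cubesWithin (cubSet ω t ∩ lambda d n) \ cubesWithin (cubSetOn (cubesIn d n) ω t) ⊆
      outerCubes d n := by
  rintro Q ⟨hQ, hQn⟩
  refine ⟨hQ.trans Set.inter_subset_right, fun hinner => hQn ?_⟩
  obtain ⟨R, hR, hQR⟩ := exists_cubeSet_subset_of_subset_iUnion (hQ.trans Set.inter_subset_left)
  have hcorner := corner_mem_cubeSet Q
  have hRn : R ∈ cubesIn d (n - 1 + 1) := mem_cubesIn_succ_of_mem (hQR hcorner) (hinner hcorner)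
  rw [Nat.sub_one_add_one hn] at hRn
  exact hQR.trans (Set.subset_biUnion_of_mem (u := cubeSet) (show R ∈ {_R ∈ _ | _} from ⟨hRn, hR⟩))

lemma betti_cubSetOn_cubesIn_le (hn : n ≠ 0) :
    betti d q (cubSetOn (cubesIn d n) ω t) ≤ bettiN d q n t ω + (outerCubes d n).ncard :=
  (betti_le_betti_add_ncard (cubSetOn_cubesIn_subset ω t n)
    (finite_cubesWithin_inter_lambda _ n)).trans
    (Nat.add_le_add_left (Set.ncard_le_ncard (cubesWithin_sdiff_subset_outerCubes hn)
      (finite_cubesIn d n).sdiff) _)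

lemma cubSetOn_preimage_translateCube (x : Fin d → ℤ) (L : Set (ElemCube d)) (ω : Config d)
    (t : ℝ) : cubSetOn (translateCube x ⁻¹' L) (configShift (-x) ω) t =
      (· + intPoint x) ⁻¹' cubSetOn L ω t := by
  ext y
  simp only [cubSetOn, configShift, neg_neg, Set.mem_preimage, Set.mem_iUnion₂]
  constructor
  · rintro ⟨Q, hQ, hy⟩
    exact ⟨translateCube x Q, hQ, (add_intPoint_mem_cubeSet_translateCube x Q y).2 hy⟩
  · rintro ⟨Q, hQ, hy⟩
    obtain ⟨Q, rfl⟩ := (translateEquiv x).surjective Q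
    exact ⟨Q, hQ, (add_intPoint_mem_cubeSet_translateCube x Q y).1 hy⟩

lemma betti_cubSetOn_configShift (x : Fin d → ℤ) (L : Set (ElemCube d)) (ω : Config d) (t : ℝ) :
    betti d q (cubSetOn (translateCube x ⁻¹' L) (configShift (-x) ω) t) =
      betti d q (cubSetOn L ω t) := by
  rw [cubSetOn_preimage_translateCube, betti_preimage_add_intPoint]

end RandomSets

section Blocks

variable {d q K n : ℕ} {t : ℝ} {ω : Config d}

/-- The block `L_{x,K}` of the elementary cubes contained in `x + Λ_K`. -/
def cubesInAt (d K : ℕ) (x : Fin d → ℤ) : Set (ElemCube d) :=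
  cubesWithin ((· - intPoint x) ⁻¹' lambda d K)

lemma preimage_translateCube_cubesInAt (x : Fin d → ℤ) :
    translateCube x ⁻¹' cubesInAt d K x = cubesIn d K := by
  ext Q
  rw [Set.mem_preimage, cubesInAt, translateCube_mem_cubesWithin, ← Set.preimage_comp]
  simp [Function.comp_def, cubesWithin, cubesIn]

lemma cubesInAt_subset_cubesIn {x : Fin d → ℤ} (hx : ∀ i, |x i| + K ≤ n) :
    cubesInAt d K x ⊆ cubesIn d n := by
  intro Q hQ y hy i
  have hxi : |(x i : ℝ)| + K ≤ n := by exact_mod_cast hx i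
  obtain ⟨hyl, hyr⟩ := hQ hy i
  simp only [intPoint, Pi.sub_apply] at hyl hyr
  constructor <;> linarith [neg_abs_le (x i : ℝ), le_abs_self (x i : ℝ)]

lemma disjoint_cubesInAt {x y : Fin d → ℤ} {i : Fin d} (hxy : 2 * (K : ℤ) < |x i - y i|) :
    Disjoint (cubesInAt d K x) (cubesInAt d K y) := by
  refine Set.disjoint_left.2 fun Q hQx hQy => hxy.not_ge ?_
  have hcorner := corner_mem_cubeSet Q
  obtain ⟨hxl, hxr⟩ := hQx hcorner i
  obtain ⟨hyl, hyr⟩ := hQy hcorner i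
  simp only [intPoint, Pi.sub_apply] at hxl hxr hyl hyr
  have : |(x i : ℝ) - y i| ≤ 2 * K := abs_le.2 ⟨by linarith, by linarith⟩
  exact_mod_cast this

lemma betti_add_one_le_of_configShift_mem_goodConfigs {x : Fin d → ℤ}
    (hω : configShift (-x) ω ∈ goodConfigs d q K t) {L : Set (ElemCube d)} (hL : L.Finite)
    (hxL : cubesInAt d K x ⊆ L) :
    betti d q (cubSetOn (L \ cubesInAt d K x) ω t) + 1 ≤ betti d q (cubSetOn L ω t) := by
  have h := hω (translateCube x ⁻¹' L) (hL.preimage (translateEquiv x).injective.injOn)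
    (by rw [← preimage_translateCube_cubesInAt x]; exact Set.preimage_mono hxL)
  rwa [← preimage_translateCube_cubesInAt x, ← Set.preimage_sdiff, betti_cubSetOn_configShift,
    betti_cubSetOn_configShift, add_comm] at h

lemma betti_add_card_le_of_configShift_mem_goodConfigs {ι : Type*} {x : ι → Fin d → ℤ}
    {J : Finset ι} (hω : ∀ j ∈ J, configShift (-x j) ω ∈ goodConfigs d q K t)
    (hdisj : (J : Set ι).PairwiseDisjoint fun j => cubesInAt d K (x j))
    {L : Set (ElemCube d)} (hL : L.Finite) (hxL : ∀ j ∈ J, cubesInAt d K (x j) ⊆ L) :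
    betti d q (cubSetOn (L \ ⋃ j ∈ J, cubesInAt d K (x j)) ω t) + J.card ≤
      betti d q (cubSetOn L ω t) := by
  classical
  induction J using Finset.induction_on with
  | empty => simp
  | insert a J ha ih =>
    rw [Finset.coe_insert, Set.pairwiseDisjoint_insert_of_notMem (by simpa using ha)] at hdisj
    simp only [Finset.forall_mem_insert] at hω hxL
    have hrest := ih hω.2 hdisj.1 hxL.2
    have hremove := betti_add_one_le_of_configShift_mem_goodConfigs hω.1
      (hL.sdiff (t := ⋃ j ∈ J, cubesInAt d K (x j)))
      (Set.subset_sdiff.2 ⟨hxL.1, Set.disjoint_iUnion₂_right.2 hdisj.2⟩)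
    rw [Set.sdiff_sdiff, Set.union_comm] at hremove
    rw [Finset.card_insert_of_notMem ha, Finset.set_biUnion_insert]
    omega

/-- The centres of the `m ^ d` cubes of side `2 (K + 1)` that tile `Λ_{(K+1)m}`. -/
def gridCenter (K m : ℕ) (j : Fin d → Fin m) : Fin d → ℤ :=
  fun i => (K + 1) * (2 * (j i : ℕ) + 1 - m)

lemma abs_gridCenter_add_le {m : ℕ} (j : Fin d → Fin m) (i : Fin d) :
    |gridCenter K m j i| + K ≤ ((K + 1) * m : ℕ) := by
  have hj := (j i).isLt
  have habs : |2 * ((j i : ℕ) : ℤ) + 1 - m| ≤ m - 1 := abs_le.2 ⟨by omega, by omega⟩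
  rw [gridCenter, abs_mul, abs_of_nonneg (by positivity : (0 : ℤ) ≤ K + 1)]
  push_cast
  nlinarith

lemma two_mul_lt_abs_gridCenter_sub {m : ℕ} {j j' : Fin d → Fin m} {i : Fin d}
    (hi : j i ≠ j' i) : 2 * (K : ℤ) < |gridCenter K m j i - gridCenter K m j' i| := by
  have hsub : gridCenter K m j i - gridCenter K m j' i =
      2 * (K + 1) * (((j i : ℕ) : ℤ) - (j' i : ℕ)) := by
    simp only [gridCenter]; ring
  have hone : 1 ≤ |((j i : ℕ) : ℤ) - (j' i : ℕ)| :=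
    Int.one_le_abs (sub_ne_zero.2 (by simpa [Fin.ext_iff] using hi))
  rw [hsub, abs_mul, abs_of_nonneg (by positivity)]
  nlinarith

lemma pairwise_disjoint_cubesInAt_gridCenter (d K m : ℕ) :
    Pairwise (Function.onFun Disjoint fun j : Fin d → Fin m => cubesInAt d K (gridCenter K m j)) :=
  fun _ _ hne => (Function.ne_iff.1 hne).elim fun _ hi =>
    disjoint_cubesInAt (two_mul_lt_abs_gridCenter_sub hi)

lemma sum_indicator_goodConfigs_le (d q K m : ℕ) (t : ℝ) (ω : Config d) :
    ∑ j : Fin d → Fin m,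
        (configShift (-gridCenter K m j) ⁻¹' goodConfigs d q K t).indicator (1 : Config d → ℝ) ω ≤
      betti d q (cubSetOn (cubesIn d ((K + 1) * m)) ω t) := by
  classical
  simp only [Set.indicator_apply, Set.mem_preimage, Pi.one_apply, Finset.sum_boole]
  refine Nat.cast_le.2 (le_of_add_le_right
    (betti_add_card_le_of_configShift_mem_goodConfigs (fun j hj => (Finset.mem_filter.1 hj).2)
      ((pairwise_disjoint_cubesInAt_gridCenter d K m).set_pairwise _) (finite_cubesIn d _)
      fun j _ => cubesInAt_subset_cubesIn (abs_gridCenter_add_le j)))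

end Blocks

section Measurability

variable {d : ℕ}

lemma measurable_of_finite_cubes {β : Type*} [MeasurableSpace β] {L : Set (ElemCube d)}
    (hL : L.Finite) (t : ℝ) (f : Set (ElemCube d) → β) :
    Measurable fun ω : Config d => f {Q ∈ L | (ω Q : ℝ) ≤ t} := by
  have : Finite L := hL
  have hstates : Measurable fun (ω : Config d) (Q : L) => (ω Q : ℝ) ≤ t :=
    measurable_pi_lambda _ fun Q => measurableSet_setOfPred.1 <|
      measurableSet_le (measurable_subtype_coe.comp (measurable_pi_apply _)) measurable_const
  have hf : Measurable fun g : L → Prop => f {Q | ∃ hQ : Q ∈ L, g ⟨Q, hQ⟩} :=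
    measurable_of_finite _
  simpa only [Function.comp_def, exists_prop] using hf.comp hstates

lemma measurable_betti_cubSetOn (q : ℕ) {L : Set (ElemCube d)} (hL : L.Finite) (t : ℝ) :
    Measurable fun ω : Config d => betti d q (cubSetOn L ω t) :=
  measurable_of_finite_cubes hL t fun S => betti d q (⋃ Q ∈ S, cubeSet Q)

lemma measurable_bettiN (d q n : ℕ) (t : ℝ) : Measurable (bettiN d q n t) := by
  have hbetti : bettiN d q n t =
      fun ω => betti d q (cubSetOn (cubesIn d (n + 1)) ω t ∩ lambda d n) :=
    funext fun ω => congrArg (betti d q) (cubSet_inter_lambda_eq ω t n)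
  rw [hbetti]
  exact measurable_of_finite_cubes (finite_cubesIn d (n + 1)) t fun S =>
    betti d q ((⋃ Q ∈ S, cubeSet Q) ∩ lambda d n)

lemma measurableSet_goodConfigs (d q K : ℕ) (t : ℝ) : MeasurableSet (goodConfigs d q K t) := by
  simp only [goodConfigs, Set.ofPred_forall]
  exact MeasurableSet.biInter Set.Countable.ofPred_finite fun L (hL : L.Finite) =>
    MeasurableSet.iInter fun _ =>
      measurableSet_le ((measurable_betti_cubSetOn q hL.sdiff t).const_add 1)
        (measurable_betti_cubSetOn q hL t)

lemma measurable_configShift (x : Fin d → ℤ) : Measurable (configShift x) :=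
  measurable_pi_lambda _ fun _ => measurable_pi_apply _

end Measurability

section Expectation

variable {d : ℕ} {P : Measure (Config d)} [IsFiniteMeasure P]

lemma integrable_bettiN (q n : ℕ) (t : ℝ) : Integrable (fun ω => (bettiN d q n t ω : ℝ)) P := by
  refine Integrable.of_bound
    (measurable_from_top.comp (measurable_bettiN d q n t)).aestronglyMeasurable ((4 * n + 1) ^ d)
    (Eventually.of_forall fun ω => ?_)
  rw [Real.norm_of_nonneg (Nat.cast_nonneg _)]
  exact_mod_cast bettiN_le d q n t ω

lemma integral_bettiN_le (q n : ℕ) (t : ℝ) :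
    ∫ ω, (bettiN d q n t ω : ℝ) ∂P ≤ (4 * n + 1) ^ d * P.real Set.univ :=
  calc ∫ ω, (bettiN d q n t ω : ℝ) ∂P
      ≤ ∫ _, ((4 * n + 1) ^ d : ℝ) ∂P :=
        integral_mono (integrable_bettiN q n t) (integrable_const _)
          fun ω => by beta_reduce; exact_mod_cast bettiN_le d q n t ω
    _ = (4 * n + 1) ^ d * P.real Set.univ := by rw [integral_const, smul_eq_mul, mul_comm]

lemma isBoundedUnder_integral_bettiN (q : ℕ) (t : ℝ) :
    IsBoundedUnder (· ≤ ·) atTop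
      fun n : ℕ => ((2 * (n : ℝ)) ^ d)⁻¹ * ∫ ω, (bettiN d q n t ω : ℝ) ∂P := by
  refine isBoundedUnder_of_eventually_le (a := 3 ^ d * P.real Set.univ) ?_
  filter_upwards [eventually_ge_atTop 1] with n hn
  have hn' : (1 : ℝ) ≤ n := by exact_mod_cast hn
  rw [inv_mul_le_iff₀ (by positivity), ← mul_assoc, ← mul_pow]
  refine (integral_bettiN_le q n t).trans ?_
  gcongr
  linarith

namespace Stationary

lemma integral_sum_indicator_configShift (hP : Stationary P) {A : Set (Config d)}
    (hA : MeasurableSet A) {ι : Type*} [Fintype ι] (x : ι → Fin d → ℤ) :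
    ∫ ω, ∑ j, (configShift (x j) ⁻¹' A).indicator (1 : Config d → ℝ) ω ∂P =
      Fintype.card ι * P.real A := by
  have hshift (j : ι) : MeasurableSet (configShift (x j) ⁻¹' A) := measurable_configShift _ hA
  rw [integral_finsetSum _ fun j _ => (integrable_const 1).indicator (hshift j)]
  simp only [integral_indicator_one (hshift _), measureReal_def, hP _ _ hA, Finset.sum_const,
    Finset.card_univ, nsmul_eq_mul]

lemma pow_mul_measureReal_goodConfigs_le (hP : Stationary P) (q K : ℕ) (t : ℝ) {m : ℕ}
    (hm : m ≠ 0) :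
    (m : ℝ) ^ d * P.real (goodConfigs d q K t) ≤
      ∫ ω, (bettiN d q ((K + 1) * m) t ω : ℝ) ∂P +
        (outerCubes d ((K + 1) * m)).ncard * P.real Set.univ := by
  have hG := measurableSet_goodConfigs d q K t
  calc (m : ℝ) ^ d * P.real (goodConfigs d q K t)
      = ∫ ω, ∑ j : Fin d → Fin m, (configShift (-gridCenter K m j) ⁻¹'
          goodConfigs d q K t).indicator (1 : Config d → ℝ) ω ∂P := by
        rw [hP.integral_sum_indicator_configShift hG]
        simp
    _ ≤ ∫ ω, ((bettiN d q ((K + 1) * m) t ω : ℝ) + (outerCubes d ((K + 1) * m)).ncard) ∂P := by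
        refine integral_mono
          (integrable_finsetSum _ fun j _ =>
            (integrable_const 1).indicator (measurable_configShift _ hG))
          ((integrable_bettiN q _ t).add (integrable_const _)) fun ω => ?_
        refine (sum_indicator_goodConfigs_le d q K m t ω).trans ?_
        exact_mod_cast betti_cubSetOn_cubesIn_le (mul_ne_zero K.succ_ne_zero hm)
    _ = _ := by
        rw [integral_add (integrable_bettiN q _ t) (integrable_const _), integral_const,
          smul_eq_mul, mul_comm (P.real _)]

lemma sub_le_inv_mul_integral_bettiN (hP : Stationary P) (q K : ℕ) (t : ℝ) {m n : ℕ}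
    (hm : m ≠ 0) (hn : n = (K + 1) * m) :
    ((2 * (K : ℝ) + 2) ^ d)⁻¹ * P.real (goodConfigs d q K t) -
        ((2 * (n : ℝ)) ^ d)⁻¹ * (outerCubes d n).ncard * P.real Set.univ ≤
      ((2 * (n : ℝ)) ^ d)⁻¹ * ∫ ω, (bettiN d q n t ω : ℝ) ∂P := by
  have hvol : ((2 * (K : ℝ) + 2) ^ d)⁻¹ = ((2 * (n : ℝ)) ^ d)⁻¹ * m ^ d := by
    have : (2 * (n : ℝ)) ^ d = (2 * (K : ℝ) + 2) ^ d * m ^ d := by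
      rw [hn, ← mul_pow]; push_cast; ring
    rw [this]
    field_simp
  rw [hvol, mul_assoc, mul_assoc, ← mul_sub]
  gcongr
  rw [sub_le_iff_le_add, hn]
  exact hP.pow_mul_measureReal_goodConfigs_le q K t hm

lemma le_betaHat (hP : Stationary P) (q K : ℕ) (t : ℝ) :
    ((2 * (K : ℝ) + 2) ^ d)⁻¹ * P.real (goodConfigs d q K t) ≤ betaHat d q P t := by
  have hφ : Tendsto (fun m : ℕ => (K + 1) * m) atTop atTop :=
    tendsto_id.const_mul_atTop' K.succ_pos
  have herror := ((tendsto_ncard_outerCubes_div d).comp hφ).mul_const (P.real Set.univ)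
  rw [zero_mul] at herror
  have hlower := herror.const_sub (((2 * (K : ℝ) + 2) ^ d)⁻¹ * P.real (goodConfigs d q K t))
  rw [sub_zero] at hlower
  refine le_limsup_of_tendsto_of_le_comp (isBoundedUnder_integral_bettiN q t) hφ hlower ?_
  filter_upwards [eventually_ne_atTop 0] with m hm
  exact hP.sub_le_inv_mul_integral_bettiN q K t hm rfl

end Stationary

end Expectation

theorem betaHat_pos_general (d q : ℕ) (t : ℝ) (P : Measure (Config d)) [IsFiniteMeasure P]
    (hstat : Stationary P) (K : ℕ) (hpos : 0 < P (goodConfigs d q K t)) :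
    ((2 * (K : ℝ) + 2) ^ d)⁻¹ * (P (goodConfigs d q K t)).toReal ≤ betaHat d q P t
      ∧ 0 < betaHat d q P t := by
  have hbound := hstat.le_betaHat q K t
  have hreal : 0 < P.real (goodConfigs d q K t) := ENNReal.toReal_pos hpos.ne' (measure_ne_top P _)
  exact ⟨hbound, lt_of_lt_of_le (by positivity) hbound⟩

/-- **positivity of the limiting Betti number.** Fix `0 ≤ q < d` and
`t ∈ [0,1]`, and let `P` be a stationary and ergodic probability measure on
`Ω = [0,1]^{K^d}`. If `P(Ω_q(0,K,t)) > 0` for some positive integer `K`, then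
`β̂_q(t) ≥ (2K+2)^{-d} P(Ω_q(0,K,t)) > 0`, where
`β̂_q(t) = limsup_{n→∞} |Λ_n|⁻¹ E[β_q^n(t)]`. -/
theorem betaHat_pos (d q : ℕ) (hq : q < d) (t : ℝ) (ht : t ∈ Set.Icc (0 : ℝ) 1)
    (P : Measure (Config d)) [IsProbabilityMeasure P]
    (hstat : Stationary P) (herg : ErgodicConfig P)
    (K : ℕ) (hK : 1 ≤ K) (hpos : 0 < P (goodConfigs d q K t)) :
    ((2 * (K : ℝ) + 2) ^ d)⁻¹ * (P (goodConfigs d q K t)).toReal ≤ betaHat d q P t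
      ∧ 0 < betaHat d q P t :=
  betaHat_pos_general d q t P hstat K hpos

end
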